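/- Let r > 0, η > 0, s ∈ ℝ^K, and p = q_r(s). If p is a fixed point of the CumLog update, i.e., q_r(s + η · c(p)) = p, then p ∈ P*; that is, ⟨c(p), p' − p⟩ ≥ 0 for all p' ∈ P, so p is a Wardrop equilibrium strategy. -/

import Mathlib

open Finset Filter Topology

/-!
Within one OD pair the logit choice satisfies `q_r(s)_k / q_r(s)_l = exp (r (s_l - s_k))`, so for
`r ≠ 0` it determines all score differences between competing routes. If adding `η c(p)` to the
scores does not change the choice, then all routes of an OD pair have the same cost at `p`. The
total cost `⟨c(p), p'⟩` is then the same for every strategy `p'`, so the variational inequality at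
`p` holds with equality.
-/

namespace RoutingGame

variable {W K : Type*} [Fintype K] [DecidableEq W] {ω : K → W}

/-- The strategy set `P` of a routing game: a probability distribution over the routes of each OD
pair, where `ω` sends a route to its OD pair. -/
def strategySet (ω : K → W) : Set (K → ℝ) :=
  {p | (∀ k, 0 ≤ p k) ∧ ∀ w, ∑ k with ω k = w, p k = 1}

/-- The logit choice `q_r(s)`. Scores are costs, so routes with larger `s k` are less likely. -/
noncomputable def logitChoice (ω : K → W) (r : ℝ) (s : K → ℝ) (k : K) : ℝ :=
  Real.exp (-r * s k) / ∑ l with ω l = ω k, Real.exp (-r * s l)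

/-- Wardrop equilibrium strategies (the set `P*`), as solutions of the variational inequality for
the route cost function `c`, which need not arise from link costs. -/
def IsWardropEquilibrium (ω : K → W) (c : (K → ℝ) → K → ℝ) (p : K → ℝ) : Prop :=
  p ∈ strategySet ω ∧ ∀ p' ∈ strategySet ω, 0 ≤ c p ⬝ᵥ (p' - p)

lemma comp_dotProduct_eq_sum_fiber {R : Type*} [NonUnitalNonAssocSemiring R]
    (f : W → R) (p : K → R) :
    (f ∘ ω) ⬝ᵥ p = ∑ w ∈ univ.image ω, f w * ∑ k with ω k = w, p k := by
  calc (f ∘ ω) ⬝ᵥ p = ∑ w ∈ univ.image ω, ∑ k with ω k = w, f (ω k) * p k :=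
        (sum_fiberwise_of_maps_to (fun _ hk ↦ mem_image_of_mem ω hk) _).symm
    _ = ∑ w ∈ univ.image ω, f w * ∑ k with ω k = w, p k := by
        refine sum_congr rfl fun w _ ↦ ?_
        rw [mul_sum]
        exact sum_congr rfl fun k hk ↦ by rw [(mem_filter.mp hk).2]

lemma dotProduct_eq_of_mem_strategySet {v p p' : K → ℝ} (hv : v.FactorsThrough ω)
    (hp : p ∈ strategySet ω) (hp' : p' ∈ strategySet ω) : v ⬝ᵥ p = v ⬝ᵥ p' := by
  obtain ⟨f, rfl⟩ := (Function.factorsThrough_iff v).mp hv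
  simp only [comp_dotProduct_eq_sum_fiber, hp.2, hp'.2]

lemma isWardropEquilibrium_of_factorsThrough {c : (K → ℝ) → K → ℝ} {p : K → ℝ}
    (hp : p ∈ strategySet ω) (hc : (c p).FactorsThrough ω) : IsWardropEquilibrium ω c p :=
  ⟨hp, fun p' hp' ↦ by
    rw [dotProduct_sub, dotProduct_eq_of_mem_strategySet hc hp' hp, sub_self]⟩

lemma sum_exp_fiber_pos (ω : K → W) (a : K → ℝ) (k : K) :
    0 < ∑ l with ω l = ω k, Real.exp (a l) :=
  sum_pos (fun _ _ ↦ Real.exp_pos _) ⟨k, by simp⟩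

lemma logitChoice_mem_strategySet (hω : Function.Surjective ω) (r : ℝ) (s : K → ℝ) :
    logitChoice ω r s ∈ strategySet ω := by
  refine ⟨fun k ↦ div_nonneg (Real.exp_pos _).le (sum_exp_fiber_pos ω _ k).le, hω.forall.mpr ?_⟩
  intro k
  calc ∑ l with ω l = ω k, logitChoice ω r s l
      = ∑ l with ω l = ω k, Real.exp (-r * s l) / ∑ j with ω j = ω k, Real.exp (-r * s j) :=
        sum_congr rfl fun l hl ↦ by rw [logitChoice, (mem_filter.mp hl).2]
    _ = 1 := by rw [← sum_div, div_self (sum_exp_fiber_pos ω _ k).ne']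

lemma logitChoice_div_logitChoice {k l : K} (hkl : ω k = ω l) (r : ℝ) (s : K → ℝ) :
    logitChoice ω r s k / logitChoice ω r s l = Real.exp (r * (s l - s k)) := by
  rw [logitChoice, logitChoice, hkl, div_div_div_cancel_right₀ (sum_exp_fiber_pos ω _ l).ne',
    ← Real.exp_sub]
  ring_nf

lemma sub_eq_sub_of_logitChoice_eq {r : ℝ} (hr : r ≠ 0) {s t : K → ℝ}
    (hst : logitChoice ω r s = logitChoice ω r t) {k l : K} (hkl : ω k = ω l) :
    s l - s k = t l - t k := by
  have hexp : Real.exp (r * (s l - s k)) = Real.exp (r * (t l - t k)) := by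
    rw [← logitChoice_div_logitChoice hkl, ← logitChoice_div_logitChoice hkl, hst]
  exact mul_left_cancel₀ hr (Real.exp_injective hexp)

lemma factorsThrough_of_logitChoice_add_smul_eq {r η : ℝ} (hr : r ≠ 0) (hη : η ≠ 0)
    {s v : K → ℝ} (h : logitChoice ω r (s + η • v) = logitChoice ω r s) :
    v.FactorsThrough ω := by
  intro k l hkl
  have hdiff := sub_eq_sub_of_logitChoice_eq hr h hkl
  simp only [Pi.add_apply, Pi.smul_apply, smul_eq_mul] at hdiff
  exact mul_left_cancel₀ hη (by linarith)

end RoutingGame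

open RoutingGame

theorem stmt_11_general {W K : Type*} [Fintype K] [DecidableEq W] {ω : K → W}
    (hω : Function.Surjective ω) (c : (K → ℝ) → K → ℝ) {r η : ℝ} (hr : r ≠ 0) (hη : η ≠ 0)
    {s : K → ℝ}
    (hfix : logitChoice ω r (s + η • c (logitChoice ω r s)) = logitChoice ω r s) :
    IsWardropEquilibrium ω c (logitChoice ω r s) :=
  isWardropEquilibrium_of_factorsThrough (logitChoice_mem_strategySet hω r s)
    (factorsThrough_of_logitChoice_add_smul_eq hr hη hfix)

theorem stmt_11
    {W K E : Type*} [Fintype W] [Fintype K] [Fintype E]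
    [DecidableEq W] [DecidableEq E]
    [Nonempty W] [Nonempty K]
    (ω : K → W) (hω : Function.Surjective ω)
    (Λ : E → K → ℝ) (hΛ : ∀ e k, Λ e k = 0 ∨ Λ e k = 1)
    (d : W → ℝ) (hd : ∀ w, 0 < d w)
    (u : (E → ℝ) → (E → ℝ))
    (P : Set (K → ℝ))
    (hP : P = {p : K → ℝ | (∀ k, 0 ≤ p k) ∧
      ∀ w, ∑ k ∈ Finset.univ.filter (fun k => ω k = w), p k = 1})
    (Λbar : E → K → ℝ) (hΛbar : ∀ e k, Λbar e k = d (ω k) * Λ e k)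
    (c : (K → ℝ) → K → ℝ)
    (hc : ∀ p k, c p k = ∑ e, Λ e k * u (fun e' => ∑ k', Λbar e' k' * p k') e)
    (q : ℝ → (K → ℝ) → K → ℝ)
    (hq : ∀ (rr : ℝ) (ss : K → ℝ) (k : K),
      q rr ss k = Real.exp (-rr * ss k) /
        ∑ k' ∈ Finset.univ.filter (fun k' => ω k' = ω k), Real.exp (-rr * ss k'))
    (r : ℝ) (hr : 0 < r) (η : ℝ) (hη : 0 < η)
    (sv : K → ℝ)
    (hfix : q r (fun k => sv k + η * c (q r sv) k) = q r sv) :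
    q r sv ∈ P ∧ ∀ pp ∈ P, 0 ≤ ∑ k, c (q r sv) k * (pp k - q r sv k) := by
  obtain rfl : q = logitChoice ω := funext fun rr ↦ funext fun ss ↦ funext (hq rr ss)
  subst hP
  exact stmt_11_general hω c hr.ne' hη.ne' hfix
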